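/- arXiv:1506.06932 — 3 statements merged into one kernel-verified Lean document; each statement's English description precedes it below -/
import Mathlib

section
/- Suppose 0 < τ < β/2 and set κ = 1/(1 − 2τ/β) and Δt_c = 2/ρ(A) (the forward Euler stability threshold). Then κ > 1 and for every Δt with 0 < Δt < κ·Δt_c, any u, u' ∈ ℝ^N satisfying the RSS step (u' − u)/Δt + τ B(u' − u) = −A u obey ⟨A u', u'⟩ ≤ ⟨A u, u⟩; in this sense RSS is at least κ times more stable than forward Euler. -/
open Matrix

/-!
Testing the scheme against the increment `d = u' - u` and expanding the quadratic energy gives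
`⟨A u', u'⟩ - ⟨A u, u⟩ = ⟨A d, d⟩ - 2 (⟨d, d⟩ / Δt + τ ⟨B d, d⟩)`.
To absorb `⟨A d, d⟩` into the dissipation, split it in proportions `θ = 2τ/β` and `1 - θ`. The
first share is at most `θ β ⟨B d, d⟩ = 2τ ⟨B d, d⟩`, the damping added by `τ B`, and only the second
share, at most `(1 - θ) ρ(A) ⟨d, d⟩`, has to be paid for by `2 ⟨d, d⟩ / Δt`. Forward Euler has to
pay for all of `ρ(A) ⟨d, d⟩`, so its threshold `2 / ρ(A)` is relaxed by the factor `1 / (1 - θ)`.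
-/

section Energy

variable {R E : Type*} [CommRing R] [AddCommGroup E] [Module R E]

lemma energy_sub_energy_of_isSelfAdjoint {m : LinearMap.BilinForm R E} (hm : m.IsSymm)
    {A : E →ₗ[R] E} (hA : m.IsSelfAdjoint A) (u u' : E) :
    m (A u') u' - m (A u) u = m (A (u' - u)) (u' - u) + 2 * m (A u) (u' - u) := by
  have hsymm : m (A u') u = m (A u) u' := (hA u' u).trans (hm.eq _ _)
  simp only [map_sub, LinearMap.sub_apply, hsymm]
  ring

end Energy

section RSS

variable {K E : Type*} [Field K] [AddCommGroup E] [Module K E]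

/-- `u'` arises from `u` by one step of the RSS scheme for `du/dt = -A u`, where `Δt` is the time
step, `B` the preconditioner and `τ` the stabilization parameter. The scheme is kept in implicit
form, so neither existence nor uniqueness of `u'` is built in; at `Δt = 0` the quotient
`1 / Δt` is `0`. -/
def IsRSSStep (A B : E → E) (τ Δt : K) (u u' : E) : Prop :=
  (1 / Δt) • (u' - u) + τ • B (u' - u) = -A u

lemma IsRSSStep.energy_sub_energy {m : LinearMap.BilinForm K E} (hm : m.IsSymm) {A : E →ₗ[K] E}
    (hA : m.IsSelfAdjoint A) {B : E → E} {τ Δt : K} {u u' : E} (h : IsRSSStep A B τ Δt u u') :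
    m (A u') u' - m (A u) u =
      m (A (u' - u)) (u' - u) -
        2 * (1 / Δt * m (u' - u) (u' - u) + τ * m (B (u' - u)) (u' - u)) := by
  have htest := congrArg (fun v ↦ m v (u' - u)) h
  simp only [map_add, map_smul, map_neg, LinearMap.add_apply, LinearMap.smul_apply,
    LinearMap.neg_apply, smul_eq_mul] at htest
  rw [energy_sub_energy_of_isSelfAdjoint hm hA, htest]
  ring

end RSS

section Stability

variable {K : Type*} [Field K] [LinearOrder K] [IsStrictOrderedRing K]

lemma le_two_mul_add_of_le_mul_of_le_mul {a b n β ρ σ τ : K} (hβ : 0 < β) (hτ : 0 ≤ τ)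
    (hτβ : 0 ≤ 1 - 2 * τ / β) (hab : a ≤ β * b) (han : a ≤ ρ * n) (hn : 0 ≤ n)
    (hσ : (1 - 2 * τ / β) * ρ ≤ 2 * σ) :
    a ≤ 2 * (σ * n + τ * b) :=
  calc
    a = 2 * τ / β * a + (1 - 2 * τ / β) * a := by ring
    _ ≤ 2 * τ / β * (β * b) + (1 - 2 * τ / β) * (ρ * n) := by gcongr
    _ = 2 * τ * b + (1 - 2 * τ / β) * ρ * n := by field_simp
    _ ≤ 2 * τ * b + 2 * σ * n := by gcongr
    _ = 2 * (σ * n + τ * b) := by ring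

lemma mul_le_two_mul_one_div_of_lt {q ρ Δt : K} (hq : 0 < q) (hρ : 0 < ρ) (hΔt : 0 < Δt)
    (h : Δt < 1 / q * (2 / ρ)) : q * ρ ≤ 2 * (1 / Δt) := by
  rw [div_mul_div_comm, one_mul, lt_div_comm₀ hΔt (mul_pos hq hρ)] at h
  rw [mul_one_div]
  exact h.le

theorem rss_kappa_times_more_stable_general {E : Type*} [AddCommGroup E] [Module K E]
    {m : LinearMap.BilinForm K E} (hm : m.IsPosSemidef) {A : E →ₗ[K] E} (hA : m.IsSelfAdjoint A)
    {B : E → E} {β ρ τ : K} (hup : ∀ u, m (A u) u ≤ β * m (B u) u) (hρ : 0 < ρ)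
    (hAρ : ∀ u, m (A u) u ≤ ρ * m u u) (hτ : 0 < τ) (hτβ : τ < β / 2) :
    1 < 1 / (1 - 2 * τ / β) ∧
      ∀ Δt : K, 0 < Δt → Δt < (1 / (1 - 2 * τ / β)) * (2 / ρ) →
        ∀ u u' : E, IsRSSStep A B τ Δt u u' → m (A u') u' ≤ m (A u) u := by
  have hβ : 0 < β := by linarith
  have hθ : 0 < 2 * τ / β := by positivity
  have hq : 0 < 1 - 2 * τ / β := by rw [sub_pos, div_lt_one hβ]; linarith
  refine ⟨one_lt_one_div hq (sub_lt_self 1 hθ), fun Δt hΔt hlt u u' hstep ↦ ?_⟩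
  rw [← sub_nonpos, hstep.energy_sub_energy hm.isSymm hA, sub_nonpos]
  exact le_two_mul_add_of_le_mul_of_le_mul hβ hτ.le hq.le (hup _) (hAρ _) (hm.isNonneg.nonneg _)
    (mul_le_two_mul_one_div_of_lt hq hρ hΔt hlt)

end Stability

section Matrix

variable {n : Type*} [Fintype n]

lemma isPosSemidef_dotProductBilin {R : Type*} [CommRing R] [LinearOrder R]
    [IsStrictOrderedRing R] :
    LinearMap.BilinForm.IsPosSemidef (dotProductBilin R R (m := n) (A := R)) where
  eq := dotProduct_comm
  nonneg x := Finset.sum_nonneg fun i _ ↦ mul_self_nonneg (x i)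

lemma isSelfAdjoint_dotProductBilin_mulVecLin {R : Type*} [CommRing R] {A : Matrix n n R}
    (hA : A.IsSymm) : (dotProductBilin R R).IsSelfAdjoint A.mulVecLin := fun x y ↦ by
  simp only [dotProductBilin_apply_apply, mulVecLin_apply, dotProduct_mulVec,
    ← mulVec_transpose, hA.eq]

variable [DecidableEq n]

open scoped ComplexOrder MatrixOrder in
lemma posSemidef_smul_one_sub_of_eigenvalues_le {𝕜 : Type*} [RCLike 𝕜] {A : Matrix n n 𝕜}
    (hA : A.IsHermitian) {r : ℝ} (hr : ∀ i, hA.eigenvalues i ≤ r) :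
    (r • (1 : Matrix n n 𝕜) - A).PosSemidef := by
  rw [← Matrix.le_iff, ← Algebra.algebraMap_eq_smul_one]
  refine le_algebraMap_of_spectrum_le (ha := hA) ?_
  rwa [hA.spectrum_real_eq_range_eigenvalues, Set.forall_mem_range]

lemma mulVec_dotProduct_self_le_of_eigenvalues_le {A : Matrix n n ℝ} (hA : A.IsHermitian) {r : ℝ}
    (hr : ∀ i, hA.eigenvalues i ≤ r) (x : n → ℝ) : A *ᵥ x ⬝ᵥ x ≤ r * (x ⬝ᵥ x) := by
  have h := (posSemidef_smul_one_sub_of_eigenvalues_le hA hr).dotProduct_mulVec_nonneg x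
  rwa [star_trivial, sub_mulVec, smul_mulVec, one_mulVec, dotProduct_sub, dotProduct_smul,
    smul_eq_mul, sub_nonneg, dotProduct_comm x (A *ᵥ x)] at h

lemma eigenvalues_le_iSup {𝕜 : Type*} [RCLike 𝕜] {A : Matrix n n 𝕜} (hA : A.IsHermitian) (i : n) :
    hA.eigenvalues i ≤ ⨆ j, hA.eigenvalues j :=
  le_ciSup (Set.finite_range _).bddAbove i

end Matrix

/-- With `0 < τ < β/2`, `κ = 1/(1 − 2τ/β)` and `Δt_c = 2/ρ(A)`
(the forward Euler stability threshold), one has `κ > 1` and the RSS step is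
energy stable for every time step `0 < Δt < κ·Δt_c`: RSS is at least `κ`
times more stable than forward Euler. -/
theorem rss_kappa_times_more_stable
    {N : ℕ} (hN : 0 < N) (A B : Matrix (Fin N) (Fin N) ℝ)
    (hA : A.PosDef) (hB : B.PosDef)
    (α β : ℝ) (hα : 0 < α) (hαβ : α ≤ β)
    (hlow : ∀ u : Fin N → ℝ, α * (B.mulVec u ⬝ᵥ u) ≤ A.mulVec u ⬝ᵥ u)
    (hup : ∀ u : Fin N → ℝ, A.mulVec u ⬝ᵥ u ≤ β * (B.mulVec u ⬝ᵥ u))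
    (τ : ℝ) (hτ : 0 < τ) (hτβ : τ < β / 2) :
    1 < 1 / (1 - 2 * τ / β) ∧
      ∀ Δt : ℝ, 0 < Δt →
        Δt < (1 / (1 - 2 * τ / β)) * (2 / (⨆ i, hA.1.eigenvalues i)) →
        ∀ u u' : Fin N → ℝ,
          (1 / Δt) • (u' - u) + τ • B.mulVec (u' - u) = -(A.mulVec u) →
          A.mulVec u' ⬝ᵥ u' ≤ A.mulVec u ⬝ᵥ u :=
  rss_kappa_times_more_stable_general (m := dotProductBilin ℝ ℝ) (A := A.mulVecLin)
    (B := B.mulVec) isPosSemidef_dotProductBilin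
    (isSelfAdjoint_dotProductBilin_mulVecLin (isHermitian_iff_isSymm.mp hA.1)) hup
    ((hA.eigenvalues_pos ⟨0, hN⟩).trans_le (eigenvalues_le_iSup hA.1 _))
    (mulVec_dotProduct_self_le_of_eigenvalues_le hA.1 (eigenvalues_le_iSup hA.1)) hτ hτβ
end

section
/- Assume that for every i ∈ {1,…,d}, 1/Δt + τ β_i − (1/4) Σ_{j=1}^{d} (‖A_{i,j}‖ + ‖A_{j,i}‖) > 0. Then any U, U' satisfying the block RSS step (U' − U)/Δt + τ B(U' − U) = −A U obey ⟨A U', U'⟩ ≤ ⟨A U, U⟩. -/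
open Matrix

/-- The operator norm of a (possibly rectangular) real matrix, induced by the
Euclidean norms. -/
noncomputable def mopNorm' {m n : Type*} [Fintype m] [Fintype n] [DecidableEq n]
    (C : Matrix m n ℝ) : ℝ :=
  ‖LinearMap.toContinuousLinearMap (Matrix.toEuclideanLin C)‖

/-!
Put `V = U' - U` and let `P` be the diagonal matrix with entries `γ_i = 1 / Δt + τ β_i` on block
`i`, so that the step reads `P V = -A U`. By symmetry of `A`,
`⟨A U', U'⟩ = ⟨A U, U⟩ + 2 ⟨A U, V⟩ + ⟨A V, V⟩ = ⟨A U, U⟩ - 2 ⟨P V, V⟩ + ⟨A V, V⟩`,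
hence the energy decreases as soon as `⟨A V, V⟩ ≤ 2 ⟨P V, V⟩`. Bounding each block contribution to
`⟨A V, V⟩` by `‖A_{i,j}‖ ‖v_i‖ ‖v_j‖ ≤ ‖A_{i,j}‖ (‖v_i‖² + ‖v_j‖²) / 2` and collecting the
coefficient of each `‖v_i‖²` reduces this to `∑ j, (‖A_{i,j}‖ + ‖A_{j,i}‖) / 2 ≤ 2 γ_i`.
-/

theorem mulVec_add_dotProduct_add_of_isSymm {R ι : Type*} [CommSemiring R] [Fintype ι]
    {A : Matrix ι ι R} (hA : A.IsSymm) (U V : ι → R) :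
    A *ᵥ (U + V) ⬝ᵥ (U + V) = A *ᵥ U ⬝ᵥ U + 2 * (A *ᵥ U ⬝ᵥ V) + A *ᵥ V ⬝ᵥ V := by
  have hcross : A *ᵥ V ⬝ᵥ U = A *ᵥ U ⬝ᵥ V := by
    rw [dotProduct_comm, ← dotProduct_transpose_mulVec, hA.eq, dotProduct_comm]
  rw [mulVec_add, add_dotProduct, dotProduct_add, dotProduct_add, hcross]
  ring

theorem mulVec_dotProduct_le_of_preconditioned_step {R ι : Type*} [CommRing R] [PartialOrder R]
    [IsOrderedAddMonoid R] [Fintype ι] {A P : Matrix ι ι R} (hA : A.IsSymm) {U U' : ι → R}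
    (hstep : P *ᵥ (U' - U) = -(A *ᵥ U))
    (hle : A *ᵥ (U' - U) ⬝ᵥ (U' - U) ≤ 2 * (P *ᵥ (U' - U) ⬝ᵥ (U' - U))) :
    A *ᵥ U' ⬝ᵥ U' ≤ A *ᵥ U ⬝ᵥ U := by
  obtain ⟨V, rfl⟩ : ∃ V, U' = U + V := ⟨U' - U, (add_sub_cancel U U').symm⟩
  rw [add_sub_cancel_left] at hstep hle
  have hAU : A *ᵥ U = -(P *ᵥ V) := by rw [hstep, neg_neg]
  calc A *ᵥ (U + V) ⬝ᵥ (U + V)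
      = A *ᵥ U ⬝ᵥ U + 2 * (A *ᵥ U ⬝ᵥ V) + A *ᵥ V ⬝ᵥ V :=
        mulVec_add_dotProduct_add_of_isSymm hA U V
    _ ≤ A *ᵥ U ⬝ᵥ U + 2 * (A *ᵥ U ⬝ᵥ V) + 2 * (P *ᵥ V ⬝ᵥ V) := by gcongr
    _ = A *ᵥ U ⬝ᵥ U := by
        rw [show A *ᵥ U ⬝ᵥ V = -(P *ᵥ V ⬝ᵥ V) by rw [hAU, neg_dotProduct]]
        ring

theorem mulVec_dotProduct_eq_sum_blocks {R ι ι' : Type*} [NonUnitalNonAssocSemiring R]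
    [Fintype ι] [Fintype ι'] {m : ι → Type*} {n : ι' → Type*} [∀ i, Fintype (m i)]
    [∀ j, Fintype (n j)] (A : Matrix (Σ i, m i) (Σ j, n j) R) (V : (Σ j, n j) → R)
    (W : (Σ i, m i) → R) :
    A *ᵥ V ⬝ᵥ W =
      ∑ i, ∑ j, A.submatrix (Sigma.mk i) (Sigma.mk j) *ᵥ (V ∘ Sigma.mk j) ⬝ᵥ (W ∘ Sigma.mk i) := by
  simp only [dotProduct, mulVec, Fintype.sum_sigma, submatrix_apply, Function.comp_apply,
    Finset.sum_mul]
  exact Finset.sum_congr rfl fun i _ => Finset.sum_comm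

theorem sum_sum_mul_add_eq {R ι : Type*} [NonUnitalNonAssocSemiring R] [Fintype ι]
    (M : ι → ι → R) (s : ι → R) :
    ∑ i, ∑ j, M i j * (s i + s j) = ∑ i, (∑ j, (M i j + M j i)) * s i := by
  simp only [mul_add, add_mul, Finset.sum_add_distrib, Finset.sum_mul]
  rw [Finset.sum_comm (f := fun i j => M i j * s j)]

theorem smul_add_smul_blockDiagonal'_mulVec {R ι : Type*} [Semiring R] [Fintype ι]
    [DecidableEq ι] {κ : ι → Type*} [∀ i, Fintype (κ i)] [∀ i, DecidableEq (κ i)]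
    (c τ : R) (β : ι → R) (V : (Σ i, κ i) → R) :
    c • V + τ • blockDiagonal' (fun i => β i • (1 : Matrix (κ i) (κ i) R)) *ᵥ V =
      (diagonal fun p : Σ i, κ i => c + τ * β p.1) *ᵥ V := by
  ext p
  simp only [smul_one_eq_diagonal, blockDiagonal'_diagonal, Pi.add_apply, Pi.smul_apply,
    mulVec_diagonal, smul_eq_mul, add_mul, mul_assoc]

theorem mulVec_dotProduct_le_mopNorm' {m n : Type*} [Fintype m] [Fintype n] [DecidableEq n]
    (C : Matrix m n ℝ) (y : n → ℝ) (x : m → ℝ) :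
    C *ᵥ y ⬝ᵥ x ≤ mopNorm' C * (‖WithLp.toLp 2 x‖ * ‖WithLp.toLp 2 y‖) := by
  have hop : ‖WithLp.toLp 2 (C *ᵥ y)‖ ≤ mopNorm' C * ‖WithLp.toLp 2 y‖ :=
    (LinearMap.toContinuousLinearMap (Matrix.toEuclideanLin C)).le_opNorm (WithLp.toLp 2 y)
  calc C *ᵥ y ⬝ᵥ x = inner ℝ (WithLp.toLp 2 x) (WithLp.toLp 2 (C *ᵥ y)) := rfl
    _ ≤ ‖WithLp.toLp 2 x‖ * ‖WithLp.toLp 2 (C *ᵥ y)‖ := real_inner_le_norm _ _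
    _ ≤ ‖WithLp.toLp 2 x‖ * (mopNorm' C * ‖WithLp.toLp 2 y‖) := by gcongr
    _ = mopNorm' C * (‖WithLp.toLp 2 x‖ * ‖WithLp.toLp 2 y‖) := mul_left_comm _ _ _

section BlockNorm

variable {ι : Type*} [Fintype ι] {κ : ι → Type*} [∀ i, Fintype (κ i)]

theorem diagonal_mulVec_dotProduct_self_eq_sum_norm_sq [DecidableEq ι] [∀ i, DecidableEq (κ i)]
    (γ : ι → ℝ) (V : (Σ i, κ i) → ℝ) :
    (diagonal fun p : Σ i, κ i => γ p.1) *ᵥ V ⬝ᵥ V =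
      ∑ i, γ i * ‖WithLp.toLp 2 (V ∘ Sigma.mk i)‖ ^ 2 := by
  simp only [EuclideanSpace.real_norm_sq_eq, dotProduct, mulVec_diagonal, Fintype.sum_sigma,
    Function.comp_apply, Finset.mul_sum]
  exact Finset.sum_congr rfl fun i _ => Finset.sum_congr rfl fun a _ => by ring

variable [∀ i, DecidableEq (κ i)]

theorem mulVec_dotProduct_self_le_sum_mopNorm'
    (A : Matrix (Σ i, κ i) (Σ i, κ i) ℝ) (V : (Σ i, κ i) → ℝ) :
    A *ᵥ V ⬝ᵥ V ≤
      1 / 2 * ∑ i, (∑ j, (mopNorm' (A.submatrix (Sigma.mk i) (Sigma.mk j)) +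
        mopNorm' (A.submatrix (Sigma.mk j) (Sigma.mk i)))) *
          ‖WithLp.toLp 2 (V ∘ Sigma.mk i)‖ ^ 2 := by
  set M : ι → ι → ℝ := fun i j => mopNorm' (A.submatrix (Sigma.mk i) (Sigma.mk j))
  set v : ι → ℝ := fun i => ‖WithLp.toLp 2 (V ∘ Sigma.mk i)‖
  have hM : ∀ i j, 0 ≤ M i j := fun i j => norm_nonneg _
  have young : ∀ i j, v i * v j ≤ 1 / 2 * (v i ^ 2 + v j ^ 2) := fun i j => by
    linarith [two_mul_le_add_sq (v i) (v j)]
  calc A *ᵥ V ⬝ᵥ V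
      = ∑ i, ∑ j, A.submatrix (Sigma.mk i) (Sigma.mk j) *ᵥ (V ∘ Sigma.mk j) ⬝ᵥ (V ∘ Sigma.mk i) :=
        mulVec_dotProduct_eq_sum_blocks A V V
    _ ≤ ∑ i, ∑ j, M i j * (v i * v j) :=
        Finset.sum_le_sum fun _ _ => Finset.sum_le_sum fun _ _ =>
          mulVec_dotProduct_le_mopNorm' _ _ _
    _ ≤ ∑ i, ∑ j, M i j * (1 / 2 * (v i ^ 2 + v j ^ 2)) :=
        Finset.sum_le_sum fun i _ => Finset.sum_le_sum fun j _ =>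
          mul_le_mul_of_nonneg_left (young i j) (hM i j)
    _ = 1 / 2 * ∑ i, ∑ j, M i j * (v i ^ 2 + v j ^ 2) := by
        simp only [Finset.mul_sum, mul_left_comm]
    _ = 1 / 2 * ∑ i, (∑ j, (M i j + M j i)) * v i ^ 2 := by
        rw [sum_sum_mul_add_eq M fun i => v i ^ 2]

theorem block_rss_energy_stability_general [DecidableEq ι]
    {A : Matrix (Σ i, κ i) (Σ i, κ i) ℝ} (hA : A.IsSymm) {γ : ι → ℝ}
    (hγ : ∀ i, 1 / 4 * ∑ j, (mopNorm' (A.submatrix (Sigma.mk i) (Sigma.mk j)) +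
      mopNorm' (A.submatrix (Sigma.mk j) (Sigma.mk i))) ≤ γ i)
    {U U' : (Σ i, κ i) → ℝ}
    (hstep : (diagonal fun p : Σ i, κ i => γ p.1) *ᵥ (U' - U) = -(A *ᵥ U)) :
    A *ᵥ U' ⬝ᵥ U' ≤ A *ᵥ U ⬝ᵥ U := by
  refine mulVec_dotProduct_le_of_preconditioned_step hA hstep ?_
  rw [diagonal_mulVec_dotProduct_self_eq_sum_norm_sq]
  refine (mulVec_dotProduct_self_le_sum_mopNorm' A _).trans ?_
  rw [Finset.mul_sum, Finset.mul_sum]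
  refine Finset.sum_le_sum fun i _ => ?_
  linarith [mul_le_mul_of_nonneg_right (hγ i) (sq_nonneg ‖WithLp.toLp 2 ((U' - U) ∘ Sigma.mk i)‖)]

end BlockNorm

/-- block RSS stability. Vectors of `ℝ^N` are decomposed into `d`
blocks (`N = n₁ + ⋯ + n_d`, modelled by the sigma type `Σ i, Fin (n i)`), `A` is
symmetric with blocks `A_{i,j}`, and `B` is the block diagonal matrix with
blocks `β_i · Id`. If for every `i`,
`1/Δt + τ β_i − (1/4) Σ_j (‖A_{i,j}‖ + ‖A_{j,i}‖) > 0`,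
then the block RSS step `(U' − U)/Δt + τ B (U' − U) = −A U` satisfies
`⟨A U', U'⟩ ≤ ⟨A U, U⟩`. -/
theorem block_rss_energy_stability
    {d : ℕ} (hd : 0 < d) (n : Fin d → ℕ) (hn : ∀ i, 0 < n i)
    (A : Matrix (Σ i, Fin (n i)) (Σ i, Fin (n i)) ℝ) (hA : A.IsSymm)
    (β : Fin d → ℝ) (hβ : ∀ i, 0 ≤ β i)
    (τ Δt : ℝ) (hτ : 0 < τ) (hΔt : 0 < Δt)
    (hcond : ∀ i : Fin d,
      0 < 1 / Δt + τ * β i -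
        (1 / 4) * ∑ j : Fin d,
          (mopNorm' (A.submatrix (Sigma.mk i) (Sigma.mk j)) +
            mopNorm' (A.submatrix (Sigma.mk j) (Sigma.mk i))))
    (U U' : (Σ i, Fin (n i)) → ℝ)
    (hstep : (1 / Δt) • (U' - U) +
        τ • (Matrix.blockDiagonal'
          (fun i => (β i) • (1 : Matrix (Fin (n i)) (Fin (n i)) ℝ))).mulVec (U' - U)
        = -(A.mulVec U)) :
    A.mulVec U' ⬝ᵥ U' ≤ A.mulVec U ⬝ᵥ U := by
  refine block_rss_energy_stability_general hA (fun i => (sub_pos.mp (hcond i)).le) ?_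
  rw [← hstep, smul_add_smul_blockDiagonal'_mulVec]
end

section
/- If τ ≥ β²/(2α) + δ²/(8α·λ_min(B)²), then for every Δt > 0, every complex eigenvalue μ of M = I − Δt (I + τΔt B)⁻¹ A satisfies |μ| < 1; that is, the RSS scheme is unconditionally stable. -/
open Matrix

/-- The operator norm of a matrix, induced by the Euclidean norm. -/
noncomputable def mopNorm {N : ℕ} (C : Matrix (Fin N) (Fin N) ℝ) : ℝ :=
  ‖LinearMap.toContinuousLinearMap (Matrix.toEuclideanLin C)‖

/-!
Write `P = I + τΔt B`. An eigenvector `v` of `M` satisfies `Δt A v = (1 - μ) P v`; pairing with `v`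
gives `Δt a = (1 - μ) (n + τΔt b)`, where `a = ⟨A v, v⟩` is complex and `b = ⟨B v, v⟩`, `n = ‖v‖²`
are positive. Since `|μ| < 1` means `|1 - μ|² < 2 Re (1 - μ)`, it is equivalent to
`Δt |a|² < 2 Re a (n + τΔt b)`, so `|a|² ≤ 2τ b Re a` suffices for every `Δt`. This follows from
`αb ≤ Re a ≤ βb` and, since `Im a` only sees the skew part of `A`, from
`|Im a| ≤ δn/2 ≤ δb/(2 λ_min(B))`.
-/

open scoped Matrix.Norms.L2Operator

section Complex

theorem norm_lt_one_iff_norm_one_sub_sq_lt {μ : ℂ} : ‖μ‖ < 1 ↔ ‖1 - μ‖ ^ 2 < 2 * (1 - μ).re := by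
  rw [← sq_lt_one_iff₀ (norm_nonneg μ), Complex.sq_norm, Complex.sq_norm, Complex.normSq_sub]
  simp only [map_one, one_mul, Complex.conj_re, Complex.sub_re, Complex.one_re]
  constructor <;> intro h <;> linarith

theorem norm_sq_le_of_re_mem_Icc_of_abs_im_le {a : ℂ} {α β γ τ b : ℝ} (hα : 0 < α) (hb : 0 ≤ b)
    (hre : a.re ∈ Set.Icc (α * b) (β * b)) (him : |a.im| ≤ γ * b)
    (hτ : (β ^ 2 + γ ^ 2) / (2 * α) ≤ τ) : ‖a‖ ^ 2 ≤ 2 * a.re * (τ * b) := by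
  have hre_nonneg : 0 ≤ a.re := (mul_nonneg hα.le hb).trans hre.1
  have hτ_nonneg : 0 ≤ τ := le_trans (by positivity) hτ
  have hβγ : β ^ 2 + γ ^ 2 ≤ τ * (2 * α) := (div_le_iff₀ (by positivity)).1 hτ
  calc ‖a‖ ^ 2 = a.re ^ 2 + |a.im| ^ 2 := by
        rw [Complex.sq_norm, Complex.normSq_apply, sq_abs, sq, sq]
    _ ≤ (β * b) ^ 2 + (γ * b) ^ 2 := by
        gcongr
        exact hre.2
    _ = (β ^ 2 + γ ^ 2) * b ^ 2 := by ring
    _ ≤ τ * (2 * α) * b ^ 2 := by gcongr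
    _ = 2 * (α * b) * (τ * b) := by ring
    _ ≤ 2 * a.re * (τ * b) := by
        gcongr
        exact hre.1

end Complex

section RCLike

open scoped ComplexOrder

variable {𝕜 m n : Type*} [RCLike 𝕜] [Fintype m] [Fintype n] [DecidableEq n]

theorem norm_mulVec_dotProduct_star_le (C : Matrix m n 𝕜) (x : m → 𝕜) (y : n → 𝕜) :
    ‖C *ᵥ y ⬝ᵥ star x‖ ≤ ‖C‖ * (‖WithLp.toLp 2 x‖ * ‖WithLp.toLp 2 y‖) := by
  rw [← EuclideanSpace.inner_toLp_toLp]
  calc ‖inner 𝕜 (WithLp.toLp 2 x) (WithLp.toLp 2 (C *ᵥ y))‖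
      ≤ ‖WithLp.toLp 2 x‖ * ‖WithLp.toLp 2 (C *ᵥ y)‖ := norm_inner_le_norm _ _
    _ ≤ ‖WithLp.toLp 2 x‖ * (‖C‖ * ‖WithLp.toLp 2 y‖) := by
        gcongr
        exact l2_opNorm_mulVec C (WithLp.toLp 2 y)
    _ = ‖C‖ * (‖WithLp.toLp 2 x‖ * ‖WithLp.toLp 2 y‖) := by ring

theorem iInf_eigenvalues_pos [Nonempty n] {B : Matrix n n 𝕜} (hB : B.PosDef) :
    0 < ⨅ i, hB.1.eigenvalues i := by
  obtain ⟨i, hi⟩ := exists_eq_ciInf_of_finite (f := hB.1.eigenvalues)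
  exact hi ▸ hB.eigenvalues_pos i

open scoped MatrixOrder in
theorem iInf_eigenvalues_smul_one_le {B : Matrix n n 𝕜} (hB : B.IsHermitian) :
    (⨅ i, hB.eigenvalues i) • (1 : Matrix n n 𝕜) ≤ B := by
  rw [← Algebra.algebraMap_eq_smul_one]
  refine algebraMap_le_of_le_spectrum (p := IsSelfAdjoint) (ha := hB) fun x hx ↦ ?_
  obtain ⟨i, rfl⟩ := hB.spectrum_real_eq_range_eigenvalues ▸ hx
  exact ciInf_le (Set.finite_range _).bddBelow i

end RCLike

section ComplexForm

variable {ι : Type*} [Fintype ι]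

/-- The complex quadratic form `v ↦ ⟨C v, v⟩` of a real matrix `C`, bundled as a real-linear map
in `C` with `v` fixed. -/
noncomputable def complexForm (v : ι → ℂ) : Matrix ι ι ℝ →ₗ[ℝ] ℂ where
  toFun C := star v ⬝ᵥ C.map (Complex.ofReal ·) *ᵥ v
  map_add' C D := by rw [Matrix.map_add _ Complex.ofReal_add, add_mulVec, dotProduct_add]
  map_smul' r C := by
    have map_real_smul : (r • C).map (Complex.ofReal ·) = r • C.map (Complex.ofReal ·) := by
      ext; simp
    rw [map_real_smul, smul_mulVec, dotProduct_smul, RingHom.id_apply]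

theorem complexForm_apply (v : ι → ℂ) (C : Matrix ι ι ℝ) :
    complexForm v C = star v ⬝ᵥ C.map (Complex.ofReal ·) *ᵥ v :=
  rfl

theorem re_complexForm (v : ι → ℂ) (C : Matrix ι ι ℝ) :
    (complexForm v C).re = C *ᵥ (fun i ↦ (v i).re) ⬝ᵥ (fun i ↦ (v i).re) +
      C *ᵥ (fun i ↦ (v i).im) ⬝ᵥ (fun i ↦ (v i).im) := by
  simp [complexForm_apply, mulVec, dotProduct, mul_comm, Finset.sum_add_distrib]

theorem im_complexForm (v : ι → ℂ) (C : Matrix ι ι ℝ) :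
    (complexForm v C).im = (C - Cᵀ) *ᵥ (fun i ↦ (v i).im) ⬝ᵥ (fun i ↦ (v i).re) := by
  rw [sub_mulVec, sub_dotProduct, mulVec_transpose, ← dotProduct_mulVec, sub_eq_neg_add]
  simp [complexForm_apply, mulVec, dotProduct, mul_comm, Finset.sum_add_distrib]

theorem ofReal_re_complexForm {C : Matrix ι ι ℝ} (hC : C.IsSymm) (v : ι → ℂ) :
    ((complexForm v C).re : ℂ) = complexForm v C := by
  apply Complex.ext <;> simp [im_complexForm, hC.eq]

theorem re_complexForm_mono {C D : Matrix ι ι ℝ} (h : ∀ u, C *ᵥ u ⬝ᵥ u ≤ D *ᵥ u ⬝ᵥ u)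
    (v : ι → ℂ) : (complexForm v C).re ≤ (complexForm v D).re := by
  rw [re_complexForm, re_complexForm]
  exact add_le_add (h _) (h _)

theorem mulVec_dotProduct_nonneg {C : Matrix ι ι ℝ} (hC : C.PosSemidef) (u : ι → ℝ) :
    0 ≤ C *ᵥ u ⬝ᵥ u := by
  simpa [dotProduct_comm] using hC.dotProduct_mulVec_nonneg u

theorem re_complexForm_mem_Icc {A B : Matrix ι ι ℝ} {α β : ℝ}
    (hlow : ∀ u, α * (B *ᵥ u ⬝ᵥ u) ≤ A *ᵥ u ⬝ᵥ u) (hup : ∀ u, A *ᵥ u ⬝ᵥ u ≤ β * (B *ᵥ u ⬝ᵥ u))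
    (v : ι → ℂ) :
    (complexForm v A).re ∈ Set.Icc (α * (complexForm v B).re) (β * (complexForm v B).re) := by
  constructor
  · simpa using re_complexForm_mono (C := α • B) (by simpa [smul_mulVec] using hlow) v
  · simpa using re_complexForm_mono (D := β • B) (by simpa [smul_mulVec] using hup) v

theorem re_complexForm_nonneg {C : Matrix ι ι ℝ} (hC : C.PosSemidef) (v : ι → ℂ) :
    0 ≤ (complexForm v C).re := by
  rw [re_complexForm]
  exact add_nonneg (mulVec_dotProduct_nonneg hC _) (mulVec_dotProduct_nonneg hC _)

theorem re_complexForm_pos {C : Matrix ι ι ℝ} (hC : C.PosDef) {v : ι → ℂ} (hv : v ≠ 0) :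
    0 < (complexForm v C).re := by
  have form_pos {u : ι → ℝ} (hu : u ≠ 0) : 0 < C *ᵥ u ⬝ᵥ u := by
    simpa [dotProduct_comm] using hC.dotProduct_mulVec_pos hu
  have form_nonneg := mulVec_dotProduct_nonneg hC.posSemidef
  rw [re_complexForm]
  by_cases hre : (fun i ↦ (v i).re) = 0
  · have him : (fun i ↦ (v i).im) ≠ 0 := fun him ↦
      hv (funext fun i ↦ Complex.ext (congrFun hre i) (congrFun him i))
    exact add_pos_of_nonneg_of_pos (form_nonneg _) (form_pos him)
  · exact add_pos_of_pos_of_nonneg (form_pos hre) (form_nonneg _)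

theorem complexForm_mul_of_mulVec_eq_smul {M : Matrix ι ι ℝ} {μ : ℂ} {v : ι → ℂ}
    (P : Matrix ι ι ℝ) (h : M.map (Complex.ofReal ·) *ᵥ v = μ • v) :
    complexForm v (P * M) = μ * complexForm v P := by
  have map_mul : (P * M).map (Complex.ofReal ·) =
      P.map (Complex.ofReal ·) * M.map (Complex.ofReal ·) :=
    Matrix.map_mul (f := Complex.ofRealHom)
  rw [complexForm_apply, map_mul, ← mulVec_mulVec, h, mulVec_smul, dotProduct_smul, smul_eq_mul,
    complexForm_apply]

variable [DecidableEq ι]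

theorem re_complexForm_one (v : ι → ℂ) :
    (complexForm v 1).re = ‖WithLp.toLp 2 fun i ↦ (v i).re‖ ^ 2 +
      ‖WithLp.toLp 2 fun i ↦ (v i).im‖ ^ 2 := by
  rw [re_complexForm, EuclideanSpace.real_norm_sq_eq, EuclideanSpace.real_norm_sq_eq]
  simp [dotProduct, sq]

theorem abs_im_complexForm_le (v : ι → ℂ) (C : Matrix ι ι ℝ) :
    |(complexForm v C).im| ≤ ‖C - Cᵀ‖ / 2 * (complexForm v 1).re := by
  set x := WithLp.toLp 2 fun i ↦ (v i).re
  set y := WithLp.toLp 2 fun i ↦ (v i).im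
  calc |(complexForm v C).im| ≤ ‖C - Cᵀ‖ * (‖x‖ * ‖y‖) := by
        rw [im_complexForm]
        exact norm_mulVec_dotProduct_star_le (C - Cᵀ) (fun i ↦ (v i).re) fun i ↦ (v i).im
    _ ≤ ‖C - Cᵀ‖ * ((‖x‖ ^ 2 + ‖y‖ ^ 2) / 2) := by
        gcongr
        linarith [two_mul_le_add_sq ‖x‖ ‖y‖]
    _ = ‖C - Cᵀ‖ / 2 * (complexForm v 1).re := by rw [re_complexForm_one]; ring

theorem iInf_eigenvalues_mul_re_complexForm_one_le {B : Matrix ι ι ℝ} (hB : B.IsHermitian)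
    (v : ι → ℂ) : (⨅ i, hB.eigenvalues i) * (complexForm v 1).re ≤ (complexForm v B).re := by
  have h := re_complexForm_nonneg (Matrix.le_iff.1 (iInf_eigenvalues_smul_one_le hB)) v
  simpa using h

theorem abs_im_complexForm_le_of_posDef {B : Matrix ι ι ℝ} (hB : B.PosDef) (A : Matrix ι ι ℝ)
    (v : ι → ℂ) :
    |(complexForm v A).im| ≤
      ‖A - Aᵀ‖ / (2 * ⨅ i, hB.1.eigenvalues i) * (complexForm v B).re := by
  cases isEmpty_or_nonempty ι
  · simp [complexForm_apply]
  have hpos := iInf_eigenvalues_pos hB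
  calc |(complexForm v A).im| ≤ ‖A - Aᵀ‖ / 2 * (complexForm v 1).re := abs_im_complexForm_le v A
    _ = ‖A - Aᵀ‖ / (2 * ⨅ i, hB.1.eigenvalues i) *
          ((⨅ i, hB.1.eigenvalues i) * (complexForm v 1).re) := by field_simp
    _ ≤ ‖A - Aᵀ‖ / (2 * ⨅ i, hB.1.eigenvalues i) * (complexForm v B).re := by
        gcongr
        exact iInf_eigenvalues_mul_re_complexForm_one_le hB.1 v

end ComplexForm

section PreconditionedIteration

variable {ι : Type*} [Fintype ι] [DecidableEq ι] {A B P : Matrix ι ι ℝ} {s : ℝ} {μ : ℂ} {v : ι → ℂ}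

theorem smul_complexForm_eq_one_sub_mul (hP : IsUnit P.det)
    (h : (1 - s • (P⁻¹ * A)).map (Complex.ofReal ·) *ᵥ v = μ • v) :
    s • complexForm v A = (1 - μ) * complexForm v P := by
  have hPM : P * (1 - s • (P⁻¹ * A)) = P - s • A := by
    rw [mul_sub, mul_one, mul_smul_comm, mul_nonsing_inv_cancel_left _ _ hP]
  have hμ : complexForm v P - s • complexForm v A = μ * complexForm v P := by
    rw [← complexForm_mul_of_mulVec_eq_smul P h, hPM, map_sub, map_smul]
  linear_combination -hμ

theorem norm_lt_one_iff_of_preconditioned (hP : P.PosDef) (hs : 0 < s) (hv : v ≠ 0)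
    (h : (1 - s • (P⁻¹ * A)).map (Complex.ofReal ·) *ᵥ v = μ • v) :
    ‖μ‖ < 1 ↔ s * ‖complexForm v A‖ ^ 2 < 2 * (complexForm v A).re * (complexForm v P).re := by
  set a := complexForm v A
  set p := (complexForm v P).re
  have hp : 0 < p := re_complexForm_pos hP hv
  have hap : s • a = (1 - μ) * p := by
    rw [ofReal_re_complexForm (by simpa using hP.1)]
    exact smul_complexForm_eq_one_sub_mul hP.det_pos.ne'.isUnit h
  have hre : s * a.re = (1 - μ).re * p := by simpa using congrArg Complex.re hap
  have hnorm : s * ‖a‖ = ‖1 - μ‖ * p := by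
    simpa [abs_of_pos, hs, hp] using congrArg norm hap
  calc ‖μ‖ < 1 ↔ ‖1 - μ‖ ^ 2 < 2 * (1 - μ).re := norm_lt_one_iff_norm_one_sub_sq_lt
    _ ↔ (‖1 - μ‖ * p) ^ 2 < 2 * ((1 - μ).re * p) * p := by
        rw [← mul_lt_mul_iff_left₀ (sq_pos_of_pos hp)]; ring_nf
    _ ↔ s * (s * ‖a‖ ^ 2) < s * (2 * a.re * p) := by rw [← hre, ← hnorm]; ring_nf
    _ ↔ s * ‖a‖ ^ 2 < 2 * a.re * p := mul_lt_mul_iff_right₀ hs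

end PreconditionedIteration

theorem rss_unconditional_stability_nonsymmetric_general
    {ι : Type*} [Fintype ι] [DecidableEq ι] {A B : Matrix ι ι ℝ} (hB : B.PosDef)
    {α β τ : ℝ} (hα : 0 < α)
    (hlow : ∀ u : ι → ℝ, α * (B *ᵥ u ⬝ᵥ u) ≤ A *ᵥ u ⬝ᵥ u)
    (hup : ∀ u : ι → ℝ, A *ᵥ u ⬝ᵥ u ≤ β * (B *ᵥ u ⬝ᵥ u))
    (hτ : β ^ 2 / (2 * α) + ‖A - Aᵀ‖ ^ 2 / (8 * α * (⨅ i, hB.1.eigenvalues i) ^ 2) ≤ τ)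
    {Δt : ℝ} (hΔt : 0 < Δt) {μ : ℂ} {v : ι → ℂ} (hv : v ≠ 0)
    (h : (1 - Δt • ((1 + (τ * Δt) • B)⁻¹ * A)).map (Complex.ofReal ·) *ᵥ v = μ • v) :
    ‖μ‖ < 1 := by
  have hτ_nonneg : 0 ≤ τ := le_trans (by positivity) hτ
  have hP : (1 + (τ * Δt) • B).PosDef :=
    PosDef.one.add_posSemidef (hB.posSemidef.smul (mul_nonneg hτ_nonneg hΔt.le))
  have hn : 0 < (complexForm v 1).re := re_complexForm_pos PosDef.one hv
  have hb : 0 < (complexForm v B).re := re_complexForm_pos hB hv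
  have hre := re_complexForm_mem_Icc hlow hup v
  have ha : 0 < (complexForm v A).re := (mul_pos hα hb).trans_le hre.1
  have hnorm : ‖complexForm v A‖ ^ 2 ≤ 2 * (complexForm v A).re * (τ * (complexForm v B).re) :=
    norm_sq_le_of_re_mem_Icc_of_abs_im_le hα hb.le hre (abs_im_complexForm_le_of_posDef hB A v)
      (hτ.trans' (le_of_eq (by ring)))
  rw [norm_lt_one_iff_of_preconditioned hP hΔt hv h]
  calc Δt * ‖complexForm v A‖ ^ 2
      ≤ Δt * (2 * (complexForm v A).re * (τ * (complexForm v B).re)) := by gcongr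
    _ < 2 * (complexForm v A).re * ((complexForm v 1).re + τ * Δt * (complexForm v B).re) := by
        linarith [mul_pos ha hn]
    _ = 2 * (complexForm v A).re * (complexForm v (1 + (τ * Δt) • B)).re := by simp

/-- unconditional stability of RSS for a nonsymmetric positive
definite matrix `A`. With `δ = ‖A − Aᵀ‖`, if
`τ ≥ β²/(2α) + δ²/(8α·λ_min(B)²)`, then for every `Δt > 0` every complex
eigenvalue `μ` of `M = I − Δt (I + τΔt B)⁻¹ A` satisfies `|μ| < 1`. -/
theorem rss_unconditional_stability_nonsymmetric
    {N : ℕ} (hN : 0 < N) (A B : Matrix (Fin N) (Fin N) ℝ)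
    (hApos : ∀ u : Fin N → ℝ, u ≠ 0 → 0 < A.mulVec u ⬝ᵥ u)
    (hB : B.PosDef)
    (α β : ℝ) (hα : 0 < α) (hαβ : α ≤ β)
    (hlow : ∀ u : Fin N → ℝ, α * (B.mulVec u ⬝ᵥ u) ≤ A.mulVec u ⬝ᵥ u)
    (hup : ∀ u : Fin N → ℝ, A.mulVec u ⬝ᵥ u ≤ β * (B.mulVec u ⬝ᵥ u))
    (τ : ℝ) (hτ : 0 < τ)
    (hτcond : β ^ 2 / (2 * α) +
        (mopNorm (A - Aᵀ)) ^ 2 / (8 * α * (⨅ i, hB.1.eigenvalues i) ^ 2) ≤ τ) :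
    ∀ Δt : ℝ, 0 < Δt →
      ∀ (μ : ℂ) (v : Fin N → ℂ), v ≠ 0 →
        (((1 : Matrix (Fin N) (Fin N) ℝ) -
            Δt • (((1 : Matrix (Fin N) (Fin N) ℝ) + (τ * Δt) • B)⁻¹ * A)).map
          (Complex.ofReal ·)).mulVec v = μ • v →
        ‖μ‖ < 1 :=
  fun _ hΔt _ _ hv h ↦
    rss_unconditional_stability_nonsymmetric_general hB hα hlow hup hτcond hΔt hv h
end
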